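/- Let δ ≥ 7 be an integer, let 𝐮 be the standard sequence over {a, b} whose slope has continued fraction expansion θ = [0, 1, ⌊δ/2⌋, 1, 1, 1, …] (partial quotients a₁ = 1, a₂ = ⌊δ/2⌋, and aₙ = 1 for all n ≥ 3), and let 𝐱_{2δ} = colour(𝐮, (12⋯δ)^ω, (1′2′⋯δ′)^ω). Then 𝐱_{2δ} is a balanced sequence over an alphabet of 2δ letters whose critical exponent equals E(𝐱_{2δ}) = (2δ−1)/(2δ−2). -/

import Mathlib

open Filter
open scoped ENNReal

namespace BalancedCE

variable {α : Type*} {β : Type*}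

/-- The factor of `v` of length `n` starting at position `i`. -/
def factorAt (v : ℕ → α) (i n : ℕ) : List α := (List.range n).map fun k => v (i + k)

/-- `u` is a factor of the sequence `v`. -/
def IsFactor (v : ℕ → α) (u : List α) : Prop := ∃ i, factorAt v i u.length = u

/-- The word `w` occurs in the sequence `v` at position `i`. -/
def OccursAt (v : ℕ → α) (w : List α) (i : ℕ) : Prop := factorAt v i w.length = w

/-- A sequence is balanced if counts of each letter in equal-length factors differ by at most 1. -/
def Balanced [DecidableEq α] (v : ℕ → α) : Prop :=
  ∀ (a : α) (u w : List α), IsFactor v u → IsFactor v w → u.length = w.length →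
    |(u.count a : ℤ) - (w.count a : ℤ)| ≤ 1

def EventuallyPeriodic (v : ℕ → α) : Prop :=
  ∃ p, 0 < p ∧ ∃ N, ∀ n, N ≤ n → v (n + p) = v n

def Recurrent (v : ℕ → α) : Prop :=
  ∀ u : List α, IsFactor v u → ∀ N : ℕ, ∃ i, N ≤ i ∧ OccursAt v u i

/-- `i < j` are consecutive occurrences of the letter `a` in `v`. -/
def ConsecOcc (v : ℕ → α) (a : α) (i j : ℕ) : Prop :=
  i < j ∧ v i = a ∧ v j = a ∧ ∀ k, i < k → k < j → v k ≠ a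

/-- `p` is a period of the finite word `z` (i.e. `z` is a prefix of `u^ω` with `|u| = p`). -/
def IsPeriod (z : List α) (p : ℕ) : Prop :=
  0 < p ∧ ∀ i, i + p < z.length → z[i]? = z[i + p]?

/-- The minimal period of a finite word. -/
noncomputable def minPeriod (z : List α) : ℕ := sInf {p | IsPeriod z p}

/-- The exponent of a finite word: its length divided by its minimal period. -/
noncomputable def expE (z : List α) : ℝ≥0∞ := (z.length : ℝ≥0∞) / (minPeriod z : ℝ≥0∞)

/-- The critical exponent of a sequence: the supremum of exponents of nonempty factors. -/
noncomputable def criticalExponent (v : ℕ → α) : ℝ≥0∞ :=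
  ⨆ (z : List α) (_ : IsFactor v z ∧ z ≠ []), expE z

/-- A Pansiot sequence over a `d`-letter alphabet. -/
def Pansiot (d : ℕ) (v : ℕ → α) : Prop :=
  (∀ i : ℕ, (factorAt v i (d - 1)).Nodup) ∧
  ∀ (a : α) (i j : ℕ), ConsecOcc v a i j → v (i + 1) ≠ v (j + 1)

/-- The letter `a` has frequency `ρ` in the sequence `v`. -/
def HasFreq [DecidableEq α] (v : ℕ → α) (a : α) (ρ : ℝ) : Prop :=
  Tendsto (fun n => ((factorAt v 0 n).count a : ℝ) / n) atTop (nhds ρ)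

/-- Factor complexity of a sequence. -/
noncomputable def complexity (v : ℕ → α) (n : ℕ) : ℕ :=
  Set.ncard {u : List α | IsFactor v u ∧ u.length = n}

/-- Sturmian sequences: aperiodic binary sequences of factor complexity `n + 1`.
Convention: the letter `a` is `false`, the letter `b` is `true`. -/
def Sturmian (u : ℕ → Bool) : Prop :=
  ¬ EventuallyPeriodic u ∧ ∀ n, complexity u n = n + 1

/-- Prepending a letter to a sequence. -/
def consSeq (c : α) (v : ℕ → α) : ℕ → α := fun n =>
  match n with
  | 0 => c
  | Nat.succ m => v m

/-- A standard sequence: a Sturmian sequence `u` such that `a·u` and `b·u` are Sturmian. -/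
def IsStandard (u : ℕ → Bool) : Prop :=
  Sturmian u ∧ Sturmian (consSeq false u) ∧ Sturmian (consSeq true u)

/-- The slope of a binary sequence, with the convention `ρ_b > ρ_a` (`a = false`, `b = true`). -/
def HasSlope (u : ℕ → Bool) (θ : ℝ) : Prop :=
  ∃ ρa ρb : ℝ, HasFreq u false ρa ∧ HasFreq u true ρb ∧ ρa < ρb ∧ θ = ρa / ρb

/-- `θ` has the (infinite) continued fraction expansion `[0; a 1, a 2, a 3, …]`:
there are complete quotients' fractional parts `t n ∈ (0,1)` with `t 0 = θ` and
`1 / t n = a (n+1) + t (n+1)` for all `n`. (The value `a 0` is irrelevant.) -/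
def HasCF (θ : ℝ) (a : ℕ → ℕ) : Prop :=
  ∃ t : ℕ → ℝ, t 0 = θ ∧ ∀ n, 0 < t n ∧ t n < 1 ∧ 1 / t n = (a (n + 1) : ℝ) + t (n + 1)

/-- Number of positions `< n` where `u` takes the value `c`. -/
def countBefore (u : ℕ → Bool) (c : Bool) (n : ℕ) : ℕ :=
  ((List.range n).filter fun i => u i = c).length

/-- The colouring of a binary sequence `u` by `y` (on the `a = false` positions)
and `y'` (on the `b = true` positions). -/
def colour (u : ℕ → Bool) (y : ℕ → α) (y' : ℕ → β) : ℕ → α ⊕ β := fun n =>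
  if u n = false then Sum.inl (y (countBefore u false n))
  else Sum.inr (y' (countBefore u true n))

/-- A constant gap sequence: periodic, and consecutive occurrences of each occurring
letter are at a constant distance. -/
def ConstantGap (y : ℕ → α) : Prop :=
  (∃ p, 0 < p ∧ ∀ n, y (n + p) = y n) ∧
  ∀ c : α, (∃ i, y i = c) → ∃ g, 0 < g ∧ ∀ i j, ConsecOcc y c i j → j - i = g

/-- The discolouration (projection) map: letters of the first alphabet go to `a = false`,
letters of the second alphabet go to `b = true`. -/
def proj : α ⊕ β → Bool := Sum.elim (fun _ => false) (fun _ => true)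

/-- `v` is a return word to `w` in the sequence `z`. -/
def IsReturnWord (z : ℕ → α) (w v : List α) : Prop :=
  ∃ i j : ℕ, i < j ∧ OccursAt z w i ∧ OccursAt z w j ∧
    (∀ k, i < k → k < j → ¬ OccursAt z w k) ∧ v = factorAt z i (j - i)

def RightSpecial (z : ℕ → α) (w : List α) : Prop :=
  ∃ a b : α, a ≠ b ∧ IsFactor z (w ++ [a]) ∧ IsFactor z (w ++ [b])

def LeftSpecial (z : ℕ → α) (w : List α) : Prop :=
  ∃ a b : α, a ≠ b ∧ IsFactor z (a :: w) ∧ IsFactor z (b :: w)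

def Bispecial (z : ℕ → α) (w : List α) : Prop := LeftSpecial z w ∧ RightSpecial z w

/-- `o` enumerates, in increasing order, all occurrences of `w` in `z`. -/
def IsOccEnum (z : ℕ → α) (w : List α) (o : ℕ → ℕ) : Prop :=
  StrictMono o ∧ (∀ n, OccursAt z w (o n)) ∧ ∀ i, OccursAt z w i → ∃ n, o n = i

/-- The derived sequence of `z` with respect to the occurrence enumeration `o` of a factor:
its `n`-th letter is the return word between the `n`-th and `(n+1)`-st occurrences. -/
def derivedSeq (z : ℕ → α) (o : ℕ → ℕ) : ℕ → List α :=
  fun n => factorAt z (o n) (o (n + 1) - o n)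

/-- The slope of a sequence over a two-letter alphabet:
the ratio of the smaller letter frequency to the larger one. -/
def HasSlope2 {γ : Type*} [DecidableEq γ] (z : ℕ → γ) (θ : ℝ) : Prop :=
  ∃ (c c' : γ) (ρ ρ' : ℝ), c ≠ c' ∧ (∀ n, z n = c ∨ z n = c') ∧
    HasFreq z c ρ ∧ HasFreq z c' ρ' ∧ ρ < ρ' ∧ θ = ρ / ρ'

/-- The purely cyclic constant gap sequence `(0 1 ⋯ (δ-1))^ω` over `ZMod δ`. -/
def cyc (δ : ℕ) : ℕ → ZMod δ := fun n => (n : ZMod δ)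

/-- The colouring `colour(u, (1 2 ⋯ δ)^ω, (1' 2' ⋯ δ')^ω)` over `2δ` letters. -/
def colourCyc (δ : ℕ) (u : ℕ → Bool) : ℕ → ZMod δ ⊕ ZMod δ := colour u (cyc δ) (cyc δ)

/-!
A Sturmian sequence has exactly one right special factor of each length, and a shortest pair of
words `c w c`, `c' w c'` violating balance would make both `c w` and `c' w` right special; so
Sturmian sequences are balanced. Hence the partial sums of a standard sequence are the integers
`⌊(n + 1) * ρ⌋`, where `ρ` is the frequency of `b`.

If a factor of length `p + r` of the colouring has period `p`, then all windows of length `p`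
starting at its first `r + 1` positions contain the same number `T` of letters `b`. Moreover
`δ ∣ T` if a `b` occurs among its first `r` letters, and `δ ∣ p - T` if an `a` does. When both
occur, `p = δ * q` and `T = δ * t`, so the points `-j * ρ` with `j ≤ r` all avoid an arc of length
`δ * |q * ρ - t|` of the circle. The number `|q * ρ - t|` is bounded below by best approximation,
whereas the same convergents show that these points leave only short gaps; the two estimates clash
unless `q ≥ 2 * r`. Runs of a single letter are so short that a direct estimate yields
`p ≥ r * (2 * δ - 2)`, with equality for `r = 1` at position `6`.
-/

section Words

variable {v : ℕ → α} {w : List α} {i j n p r : ℕ}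

lemma length_factorAt (v : ℕ → α) (i n : ℕ) : (factorAt v i n).length = n := by
  simp [factorAt]

lemma isFactor_factorAt (v : ℕ → α) (i n : ℕ) : IsFactor v (factorAt v i n) :=
  ⟨i, by rw [length_factorAt]⟩

lemma getElem?_factorAt (h : j < n) : (factorAt v i n)[j]? = some (v (i + j)) := by
  simp [factorAt, h]

lemma factorAt_eq_factorAt_iff :
    factorAt v i n = factorAt v j n ↔ ∀ t < n, v (i + t) = v (j + t) := by
  simp [factorAt]

lemma factorAt_succ (v : ℕ → α) (i n : ℕ) :
    factorAt v i (n + 1) = factorAt v i n ++ [v (i + n)] := by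
  simp [factorAt, List.range_succ]

lemma factorAt_succ' (v : ℕ → α) (i n : ℕ) :
    factorAt v i (n + 1) = v i :: factorAt v (i + 1) n := by
  simp [factorAt, List.range_succ_eq_map, Function.comp_def, add_assoc, add_comm 1]

lemma IsFactor.of_cons {a : α} (h : IsFactor v (a :: w)) : IsFactor v w := by
  obtain ⟨i, hi⟩ := h
  rw [List.length_cons, factorAt_succ'] at hi
  exact ⟨i + 1, (List.cons.inj hi).2⟩

lemma IsFactor.exists_append_singleton (h : IsFactor v w) : ∃ a, IsFactor v (w ++ [a]) := by
  obtain ⟨i, hi⟩ := h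
  refine ⟨v (i + w.length), ?_⟩
  nth_rw 1 [← hi]
  rw [← factorAt_succ]
  exact isFactor_factorAt v i _

/-- The factor of length `p + r` of `v` at position `i` has period `p`; it is a repetition of
exponent `1 + r / p`. -/
def IsRepetition (v : ℕ → α) (i p r : ℕ) : Prop := ∀ j < r, v (i + j) = v (i + j + p)

lemma isPeriod_factorAt_iff (hp : 0 < p) :
    IsPeriod (factorAt v i (p + r)) p ↔ IsRepetition v i p r := by
  rw [IsPeriod, length_factorAt, and_iff_right hp]
  refine forall_congr' fun j => ?_
  rw [add_comm j p, Nat.add_lt_add_iff_left]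
  refine imp_congr_right fun hj => ?_
  rw [getElem?_factorAt (by omega), getElem?_factorAt (by omega), Option.some_inj,
    add_assoc, add_comm p j]

lemma isPeriod_minPeriod (hw : w ≠ []) : IsPeriod w (minPeriod w) :=
  Nat.sInf_mem (s := {p | IsPeriod w p})
    ⟨w.length, List.length_pos_of_ne_nil hw, fun i hi => absurd hi (by omega)⟩

lemma natCast_add_div_self (hp : 0 < p) (r : ℕ) :
    ((p + r : ℕ) : ℝ≥0∞) / p = 1 + (r : ℝ≥0∞) / p := by
  rw [Nat.cast_add, ENNReal.add_div,
    ENNReal.div_self (Nat.cast_ne_zero.mpr hp.ne') (ENNReal.natCast_ne_top p)]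

lemma criticalExponent_le {c : ℝ≥0∞}
    (h : ∀ i p r, 0 < p → IsRepetition v i p r → (r : ℝ≥0∞) / p ≤ c) :
    criticalExponent v ≤ 1 + c := by
  refine iSup₂_le fun w hw => ?_
  obtain ⟨⟨i, hi⟩, hne⟩ := hw
  have hper := isPeriod_minPeriod hne
  unfold expE
  set p := minPeriod w
  rcases le_total w.length p with hle | hle
  · exact (ENNReal.div_le_of_le_mul (by rw [one_mul]; exact_mod_cast hle)).trans le_self_add
  · obtain ⟨r, hr⟩ := Nat.exists_eq_add_of_le hle
    rw [← hi, hr, isPeriod_factorAt_iff hper.1] at hper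
    rw [hr, natCast_add_div_self (isPeriod_minPeriod hne).1]
    gcongr
    exact h i p r (isPeriod_minPeriod hne).1 hper

lemma IsRepetition.le_criticalExponent (hp : 0 < p) (h : IsRepetition v i p r) :
    1 + (r : ℝ≥0∞) / p ≤ criticalExponent v := by
  have hne : factorAt v i (p + r) ≠ [] := by
    rw [← List.length_pos_iff, length_factorAt]
    omega
  refine le_trans ?_ (le_iSup₂ (factorAt v i (p + r)) ⟨isFactor_factorAt v i _, hne⟩)
  have hmin : minPeriod (factorAt v i (p + r)) ≤ p :=
    Nat.sInf_le ((isPeriod_factorAt_iff hp).mpr h)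
  rw [expE, length_factorAt, ← natCast_add_div_self hp]
  gcongr

end Words

section Complexity

variable {v : ℕ → α} {w w' : List α} {i j n : ℕ}

lemma finite_setOf_isFactor_length_eq [Finite α] (v : ℕ → α) (n : ℕ) :
    {w | IsFactor v w ∧ w.length = n}.Finite :=
  (List.finite_length_eq α n).subset fun _ h => h.2

lemma RightSpecial.of_cons {a : α} (h : RightSpecial v (a :: w)) : RightSpecial v w := by
  obtain ⟨b, c, hbc, hb, hc⟩ := h
  exact ⟨b, c, hbc, hb.of_cons, hc.of_cons⟩

lemma RightSpecial.exists_isFactor_append_ne (h : RightSpecial v w) (a : α) :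
    ∃ b ≠ a, IsFactor v (w ++ [b]) := by
  obtain ⟨b, c, hbc, hb, hc⟩ := h
  by_cases hba : b = a
  · exact ⟨c, fun hca => hbc (hba.trans hca.symm), hc⟩
  · exact ⟨b, hba, hb⟩

lemma RightSpecial.eq_of_complexity_succ_le [Finite α]
    (hv : complexity v (n + 1) ≤ complexity v n + 1) (hw : RightSpecial v w)
    (hw' : RightSpecial v w') (hn : w.length = n) (hn' : w'.length = n) : w = w' := by
  by_contra hne
  obtain ⟨a, -, -, ha, -⟩ := id hw
  obtain ⟨a', -, -, ha', -⟩ := id hw'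
  set F := {z | IsFactor v z ∧ z.length = n + 1}
  have hF : F.Finite := finite_setOf_isFactor_length_eq v (n + 1)
  have haF : w ++ [a] ∈ F := ⟨ha, by simp [hn]⟩
  have haF' : w' ++ [a'] ∈ F := ⟨ha', by simp [hn']⟩
  -- Dropping one right extension of `w` and one of `w'` still leaves an extension of each factor.
  have hsub : {z | IsFactor v z ∧ z.length = n} ⊆
      List.dropLast '' (F \ {w ++ [a], w' ++ [a']}) := by
    rintro z ⟨hz, hzn⟩
    obtain ⟨b, hb, hwb, hwb'⟩ :
        ∃ b, IsFactor v (z ++ [b]) ∧ z ++ [b] ≠ w ++ [a] ∧ z ++ [b] ≠ w' ++ [a'] := by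
      simp only [ne_eq, List.append_singleton_inj, not_and]
      rcases eq_or_ne z w with rfl | hzw
      · obtain ⟨b, hba, hb⟩ := hw.exists_isFactor_append_ne a
        exact ⟨b, hb, fun _ => hba, fun h => absurd h hne⟩
      rcases eq_or_ne z w' with rfl | hzw'
      · obtain ⟨b, hba, hb⟩ := hw'.exists_isFactor_append_ne a'
        exact ⟨b, hb, fun h => absurd h hzw, fun _ => hba⟩
      · obtain ⟨b, hb⟩ := hz.exists_append_singleton
        exact ⟨b, hb, fun h => absurd h hzw, fun h => absurd h hzw'⟩
    exact ⟨z ++ [b], ⟨⟨hb, by simp [hzn]⟩, by simp [hwb, hwb']⟩, List.dropLast_concat⟩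
  have hcard : complexity v n ≤ (F \ {w ++ [a], w' ++ [a']}).ncard :=
    (Set.ncard_le_ncard hsub (hF.sdiff.image _)).trans (Set.ncard_image_le hF.sdiff)
  have hpair : ({w ++ [a], w' ++ [a']} : Set (List α)).ncard = 2 :=
    Set.ncard_pair fun h => hne (List.append_singleton_inj.mp h).1
  have hF_card : (F \ {w ++ [a], w' ++ [a']}).ncard + 2 = complexity v (n + 1) := by
    rw [← hpair]
    exact Set.ncard_sdiff_add_ncard_of_subset (Set.pair_subset haF haF') hF
  omega

lemma apply_add_eq_of_not_rightSpecial (hns : ¬ RightSpecial v (factorAt v i n))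
    (h : factorAt v i n = factorAt v j n) : v (i + n) = v (j + n) := by
  by_contra hne
  refine hns ⟨v (i + n), v (j + n), hne, ?_, ?_⟩
  · exact factorAt_succ v i n ▸ isFactor_factorAt v i (n + 1)
  · exact h ▸ factorAt_succ v j n ▸ isFactor_factorAt v j (n + 1)

lemma eventuallyPeriodic_of_factorAt_eq (hij : i < j) (h : factorAt v i n = factorAt v j n)
    (hns : ∀ t, i ≤ t → t < j → ¬ RightSpecial v (factorAt v t n)) : EventuallyPeriodic v := by
  have key : ∀ t, factorAt v (i + t) n = factorAt v (j + t) n ∧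
      ¬ RightSpecial v (factorAt v (i + t) n) := by
    intro t
    induction t using Nat.strong_induction_on with
    | _ t ih =>
      constructor
      · rcases t with _ | t
        · exact h
        · obtain ⟨heq, hns'⟩ := ih t t.lt_succ_self
          have hnext := apply_add_eq_of_not_rightSpecial hns' heq
          have hlong : factorAt v (i + t) (n + 1) = factorAt v (j + t) (n + 1) := by
            rw [factorAt_succ, factorAt_succ, heq, hnext]
          rw [factorAt_succ', factorAt_succ'] at hlong
          exact (List.cons.inj hlong).2
      · rcases lt_or_ge (i + t) j with ht | ht
        · exact hns _ (Nat.le_add_right i t) ht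
        · obtain ⟨s, rfl⟩ : ∃ s, t = (j - i) + s := ⟨t - (j - i), by omega⟩
          obtain ⟨heq, hns'⟩ := ih s (by omega)
          rwa [show i + (j - i + s) = j + s by omega, ← heq]
  refine ⟨j - i, by omega, i + n, fun m hm => ?_⟩
  obtain ⟨t, rfl⟩ := Nat.exists_eq_add_of_le hm
  have hnext := apply_add_eq_of_not_rightSpecial (key t).2 (key t).1
  rw [show i + n + t + (j - i) = j + t + n by omega, ← hnext, add_right_comm]

lemma exists_rightSpecial_factorAt [Finite α] (hv : ¬ EventuallyPeriodic v) (i n : ℕ) :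
    ∃ t < complexity v n, RightSpecial v (factorAt v (i + t) n) := by
  by_contra! hns
  have hfin := finite_setOf_isFactor_length_eq v n
  obtain ⟨s, t, ht, hst, heq⟩ : ∃ s, ∃ t ≤ complexity v n, s < t ∧
      factorAt v (i + s) n = factorAt v (i + t) n := by
    obtain ⟨s, hs, t, ht, hne, heq⟩ := Set.exists_ne_map_eq_of_ncard_lt_of_maps_to
      (s := Set.Iic (complexity v n)) (t := {w | IsFactor v w ∧ w.length = n})
      (by rw [Set.ncard_Iic_nat]; exact Nat.lt_succ_self _) (f := fun s => factorAt v (i + s) n)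
      (fun s _ => ⟨isFactor_factorAt v _ n, length_factorAt v _ n⟩) hfin
    rcases lt_or_gt_of_ne hne with hlt | hlt
    · exact ⟨s, t, ht, hlt, heq⟩
    · exact ⟨t, s, hs, hlt, heq.symm⟩
  refine hv (eventuallyPeriodic_of_factorAt_eq (Nat.add_lt_add_left hst i) heq ?_)
  intro m hm hmt
  obtain ⟨l, rfl⟩ := Nat.exists_eq_add_of_le ((Nat.le_add_right i s).trans hm)
  exact hns l (by omega)

end Complexity

section Balance

variable {v : ℕ → Bool} {c : Bool} {i j m n : ℕ}

lemma countBefore_succ (v : ℕ → Bool) (c : Bool) (n : ℕ) :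
    countBefore v c (n + 1) = countBefore v c n + if v n = c then 1 else 0 := by
  by_cases h : v n = c <;> simp [countBefore, List.range_succ, h]

lemma countBefore_add (v : ℕ → Bool) (c : Bool) (i n : ℕ) :
    countBefore v c (i + n) = countBefore v c i + (factorAt v i n).count c := by
  induction n with
  | zero => simp [factorAt]
  | succ n ih =>
    rw [← add_assoc, countBefore_succ, ih, factorAt_succ, List.count_append,
      List.count_singleton, add_assoc]
    simp only [beq_iff_eq]

lemma countBefore_false_add_countBefore_true (v : ℕ → Bool) (n : ℕ) :
    countBefore v false n + countBefore v true n = n := by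
  induction n with
  | zero => rfl
  | succ n ih =>
    rw [countBefore_succ, countBefore_succ]
    cases v n <;> grind

/-- The number of letters `true` before position `n`. It is an integer because the arguments
compare differences of its values. -/
def ones (v : ℕ → Bool) (n : ℕ) : ℤ := countBefore v true n

lemma ones_zero (v : ℕ → Bool) : ones v 0 = 0 := rfl

lemma ones_succ (v : ℕ → Bool) (n : ℕ) : ones v (n + 1) = ones v n + if v n then 1 else 0 := by
  simp [ones, countBefore_succ]

lemma countBefore_false_eq (v : ℕ → Bool) (n : ℕ) : (countBefore v false n : ℤ) = n - ones v n := by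
  have := countBefore_false_add_countBefore_true v n
  unfold ones
  omega

lemma apply_eq_apply_iff_ones :
    v m = v n ↔ ones v (m + 1) - ones v m = ones v (n + 1) - ones v n := by
  rw [ones_succ, ones_succ]
  cases v m <;> cases v n <;> simp

lemma count_true_factorAt (v : ℕ → Bool) (i n : ℕ) :
    ((factorAt v i n).count true : ℤ) = ones v (i + n) - ones v i := by
  rw [ones, ones, countBefore_add]
  push_cast
  ring

lemma count_false_factorAt (v : ℕ → Bool) (i n : ℕ) :
    ((factorAt v i n).count false : ℤ) = n - (ones v (i + n) - ones v i) := by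
  rw [← count_true_factorAt, eq_sub_iff_add_eq]
  exact_mod_cast (List.count_false_add_count_true _).trans (length_factorAt v i n)

lemma balanced_iff_ones_sub_le :
    Balanced v ↔ ∀ i j n, ones v (i + n) - ones v i ≤ ones v (j + n) - ones v j + 1 := by
  constructor
  · intro h i j n
    have := h true _ _ (isFactor_factorAt v i n) (isFactor_factorAt v j n)
      (by simp only [length_factorAt])
    rw [count_true_factorAt, count_true_factorAt, abs_le] at this
    linarith
  · rintro h c w w' ⟨i, hi⟩ ⟨j, hj⟩ hlen
    rw [← hi, ← hj, ← hlen, abs_le]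
    have hij := h i j
    have hji := h j i
    cases c
    · rw [count_false_factorAt, count_false_factorAt]
      constructor <;> linarith [hij w.length, hji w.length]
    · rw [count_true_factorAt, count_true_factorAt]
      constructor <;> linarith [hij w.length, hji w.length]

/-- The factors of length `n` at positions `i` and `j` form a shortest pair violating balance. -/
structure IsMinimalExcess (v : ℕ → Bool) (n i j : ℕ) : Prop where
  balanced : ∀ l < n, ∀ i j, ones v (i + l) - ones v i ≤ ones v (j + l) - ones v j + 1
  excess : ones v (j + n) - ones v j + 1 < ones v (i + n) - ones v i

lemma exists_isMinimalExcess (hv : ¬ Balanced v) : ∃ n i j, IsMinimalExcess v n i j := by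
  have hex : ∃ n i j, ones v (j + n) - ones v j + 1 < ones v (i + n) - ones v i := by
    simp only [balanced_iff_ones_sub_le, not_forall, not_le] at hv
    obtain ⟨i, j, n, h⟩ := hv
    exact ⟨n, i, j, h⟩
  classical
  obtain ⟨i, j, h⟩ := Nat.find_spec hex
  refine ⟨Nat.find hex, i, j, fun l hl i j => ?_, h⟩
  have := Nat.find_min hex hl
  push Not at this
  exact this i j

lemma IsMinimalExcess.ones_add_of_lt (h : IsMinimalExcess v n i j) {l : ℕ} (hl : 0 < l)
    (hln : l < n) : ones v (i + l) - ones v i = ones v (j + l) - ones v j + 1 := by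
  have hprefix := h.balanced l hln i j
  have hsuffix := h.balanced (n - l) (by omega) (i + l) (j + l)
  rw [add_assoc, add_assoc, Nat.add_sub_cancel' hln.le] at hsuffix
  linarith [h.excess]

lemma IsMinimalExcess.two_le (h : IsMinimalExcess v n i j) : 2 ≤ n := by
  have hexc := h.excess
  rcases n with _ | _ | n
  · simp at hexc
  · rw [zero_add, ones_succ, ones_succ] at hexc
    split_ifs at hexc <;> omega
  · omega

lemma IsMinimalExcess.ones_add_self (h : IsMinimalExcess v n i j) :
    ones v (i + n) - ones v i = ones v (j + n) - ones v j + 2 := by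
  obtain ⟨m, rfl⟩ : ∃ m, n = m + 1 := ⟨n - 1, by have := h.two_le; omega⟩
  have hexc := h.excess
  have hinner := h.ones_add_of_lt (l := m) (by have := h.two_le; omega) m.lt_succ_self
  rw [← add_assoc, ← add_assoc, ones_succ, ones_succ] at hexc ⊢
  split_ifs at hexc ⊢ <;> omega

lemma IsMinimalExcess.ones_add_ones (h : IsMinimalExcess v n i j) {l l' : ℕ} (hl : 0 < l)
    (hl' : 0 < l') (hn : l + l' = n) :
    (ones v (i + l) - ones v i) + (ones v (i + l') - ones v i) = ones v (i + n) - ones v i := by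
  have hle := h.balanced l (by omega) i (j + l')
  have hge := h.balanced l (by omega) (i + l') j
  rw [add_assoc, add_comm l', hn] at hle hge
  have hinner := h.ones_add_of_lt hl (by omega)
  have hinner' := h.ones_add_of_lt hl' (by omega)
  linarith [h.ones_add_self]

/-- Occurrences at positions `i` and `j` of words `c w c` and `c' w c'`, where `c ≠ c'` and `w` is
a palindrome of length `m`. -/
structure IsUnbalancedPair (v : ℕ → Bool) (c : Bool) (m i j : ℕ) : Prop where
  left : v i = c
  right : v (i + m + 1) = c
  left' : v j = !c
  right' : v (j + m + 1) = !c
  inner : ∀ t < m, v (i + 1 + t) = v (j + 1 + t)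
  palindrome : ∀ s t, s + t + 1 = m → v (i + 1 + s) = v (i + 1 + t)

lemma IsUnbalancedPair.symm (h : IsUnbalancedPair v c m i j) :
    IsUnbalancedPair v (!c) m j i where
  left := h.left'
  right := h.right'
  left' := by rw [h.left, Bool.not_not]
  right' := by rw [h.right, Bool.not_not]
  inner t ht := (h.inner t ht).symm
  palindrome s t hst := by
    rw [← h.inner s (by omega), ← h.inner t (by omega), h.palindrome s t hst]

lemma IsMinimalExcess.isUnbalancedPair (h : IsMinimalExcess v (m + 1 + 1) i j) :
    IsUnbalancedPair v true m i j := by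
  have hone := h.ones_add_of_lt one_pos (by omega)
  have hinner := fun t (ht : t ≤ m) =>
    h.ones_add_of_lt t.succ_pos (Nat.lt_succ_of_le (Nat.succ_le_succ ht))
  have hall := h.ones_add_self
  have hlast := hinner m le_rfl
  simp only [Nat.succ_eq_add_one, ← add_assoc] at hinner hall hlast
  have hfirst : v i = true ∧ v j = false := by
    rw [ones_succ, ones_succ] at hone
    cases hi : v i <;> cases hj : v j <;> simp_all
  have hend : v (i + m + 1) = true ∧ v (j + m + 1) = false := by
    rw [ones_succ v (i + m + 1), ones_succ v (j + m + 1)] at hall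
    revert hall
    cases v (i + m + 1) <;> cases v (j + m + 1) <;> simp <;> omega
  refine ⟨hfirst.1, hend.1, hfirst.2, hend.2, fun t ht => ?_, fun s t hst => ?_⟩
  · have hnext := hinner (t + 1) ht
    simp only [← add_assoc] at hnext
    rw [apply_eq_apply_iff_ones, add_right_comm i, add_right_comm j]
    linarith [hinner t ht.le]
  · have hs := h.ones_add_ones (l := s + 1) (l' := t + 1 + 1) (by omega) (by omega) (by omega)
    have ht := h.ones_add_ones (l := s + 1 + 1) (l' := t + 1) (by omega) (by omega) (by omega)
    simp only [← add_assoc] at hs ht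
    rw [apply_eq_apply_iff_ones, add_right_comm i 1 s, add_right_comm i 1 t]
    linarith

lemma exists_isUnbalancedPair (hv : ¬ Balanced v) : ∃ m i j, IsUnbalancedPair v true m i j := by
  obtain ⟨n, i, j, h⟩ := exists_isMinimalExcess hv
  obtain ⟨m, rfl⟩ := Nat.exists_eq_add_of_le' h.two_le
  exact ⟨m, i, j, h.isUnbalancedPair⟩

lemma IsUnbalancedPair.factorAt_inner (h : IsUnbalancedPair v c m i j) :
    factorAt v (i + 1) m = factorAt v (j + 1) m :=
  factorAt_eq_factorAt_iff.mpr h.inner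

lemma IsUnbalancedPair.rightSpecial_inner (h : IsUnbalancedPair v c m i j) :
    RightSpecial v (factorAt v (i + 1) m) := by
  refine ⟨c, !c, by simp, ?_, ?_⟩
  · rw [← h.right, add_right_comm i, ← factorAt_succ]
    exact isFactor_factorAt v _ _
  · rw [← h.right', add_right_comm j, h.factorAt_inner, ← factorAt_succ]
    exact isFactor_factorAt v _ _

lemma IsUnbalancedPair.apply_add_eq (h : IsUnbalancedPair v c m i j) {l : ℕ} (hl : l ≤ m + 1)
    (heq : factorAt v (i + l + 1) m = factorAt v (i + 1) m) : v (i + l) = c := by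
  rcases Nat.eq_zero_or_pos l with rfl | hpos
  · exact h.left
  rcases hl.eq_or_lt with rfl | hlt
  · exact h.right
  -- The letter at distance `m + 1 - l` before the final `c` of `c w c` is read in the copy of `w`
  -- starting at `i + l + 1`.
  calc v (i + l) = v (i + 1 + (l - 1)) := by congr 1; omega
    _ = v (i + 1 + (m - l)) := h.palindrome _ _ (by omega)
    _ = v (i + l + 1 + (m - l)) := (factorAt_eq_factorAt_iff.mp heq _ (by omega)).symm
    _ = v (i + m + 1) := by congr 1; omega
    _ = c := h.right

lemma IsUnbalancedPair.rightSpecial (h : IsUnbalancedPair v c m i j) (hv : Sturmian v) :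
    RightSpecial v (factorAt v i (m + 1)) := by
  obtain ⟨l, hl, hspecial⟩ := exists_rightSpecial_factorAt hv.1 i (m + 1)
  rw [hv.2] at hl
  rw [factorAt_succ'] at hspecial
  have heq : factorAt v (i + l + 1) m = factorAt v (i + 1) m :=
    hspecial.of_cons.eq_of_complexity_succ_le (by rw [hv.2, hv.2]) h.rightSpecial_inner
      (length_factorAt v _ m) (length_factorAt v _ m)
  rwa [heq, h.apply_add_eq (by omega) heq, ← h.left, ← factorAt_succ'] at hspecial

lemma Sturmian.balanced (hv : Sturmian v) : Balanced v := by
  by_contra hunb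
  obtain ⟨m, i, j, h⟩ := exists_isUnbalancedPair hunb
  have heq : factorAt v i (m + 1) = factorAt v j (m + 1) :=
    (h.rightSpecial hv).eq_of_complexity_succ_le (by rw [hv.2, hv.2]) (h.symm.rightSpecial hv)
      (length_factorAt v i _) (length_factorAt v j _)
  have hletters : v i = v j := factorAt_eq_factorAt_iff.mp heq 0 m.succ_pos
  rw [h.left, h.left'] at hletters
  exact absurd hletters (by decide)

end Balance

section CharacteristicWord

variable {u v : ℕ → Bool} {ρ : ℝ}

lemma hasFreq_true_iff :
    HasFreq v true ρ ↔ Tendsto (fun n : ℕ => (ones v n : ℝ) / n) atTop (nhds ρ) := by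
  have hcount (n : ℕ) : (ones v n : ℝ) = (factorAt v 0 n).count true := by
    have := count_true_factorAt v 0 n
    rw [zero_add, ones_zero, sub_zero] at this
    exact_mod_cast this.symm
  simp only [HasFreq, hcount]

lemma Balanced.abs_ones_mul_sub_le (hv : Balanced v) (L n : ℕ) :
    |ones v (L * n) - L * ones v n| ≤ L := by
  rw [balanced_iff_ones_sub_le] at hv
  induction L with
  | zero => simp [ones_zero]
  | succ L ih =>
    have hle := hv (L * n) 0 n
    have hge := hv 0 (L * n) n
    rw [← Nat.succ_mul, zero_add, ones_zero] at hle hge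
    rw [abs_le] at ih ⊢
    push_cast
    constructor <;> linarith

lemma Balanced.abs_ones_sub_le (hv : Balanced v) (hρ : HasFreq v true ρ) (n : ℕ) :
    |n * ρ - ones v n| ≤ 1 := by
  rcases n.eq_zero_or_pos with rfl | hn
  · simp [ones_zero]
  have hmul : Tendsto (fun L : ℕ => L * n) atTop atTop := tendsto_id.atTop_mul_const' hn
  have hlim := (((hasFreq_true_iff.mp hρ).comp hmul).const_mul (n : ℝ)).sub_const (ones v n : ℝ)
  refine le_of_tendsto hlim.abs ((eventually_gt_atTop 0).mono fun L hL => ?_)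
  have hL' : (0 : ℝ) < L := by exact_mod_cast hL
  have hn' : (n : ℝ) ≠ 0 := by exact_mod_cast hn.ne'
  have hbound : |(ones v (L * n) : ℝ) - L * ones v n| ≤ L := by
    exact_mod_cast hv.abs_ones_mul_sub_le L n
  calc |(n : ℝ) * (ones v (L * n) / (L * n : ℕ)) - ones v n|
      = |(ones v (L * n) : ℝ) - L * ones v n| / L := by
        rw [← abs_of_pos hL', ← abs_div, abs_of_pos hL']
        congr 1
        push_cast
        field_simp
    _ ≤ 1 := (div_le_one hL').mpr hbound

lemma ones_consSeq (c : Bool) (v : ℕ → Bool) (n : ℕ) :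
    ones (consSeq c v) (n + 1) = ones v n + if c then 1 else 0 := by
  induction n with
  | zero => rw [ones_succ, ones_zero, ones_zero]; rfl
  | succ n ih =>
    rw [ones_succ, ih, ones_succ, add_right_comm]
    rfl

lemma HasFreq.cons (hρ : HasFreq v true ρ) (c : Bool) : HasFreq (consSeq c v) true ρ := by
  rw [hasFreq_true_iff] at hρ ⊢
  rw [← tendsto_add_atTop_iff_nat 1]
  have hlim := (hρ.mul (tendsto_natCast_div_add_atTop (1 : ℝ))).add
    ((tendsto_one_div_add_atTop_nhds_zero_nat (𝕜 := ℝ)).const_mul (if c then 1 else 0))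
  rw [mul_one, mul_zero, add_zero] at hlim
  refine hlim.congr' ((eventually_gt_atTop 0).mono fun n hn => ?_)
  have hn' : (n : ℝ) ≠ 0 := by exact_mod_cast hn.ne'
  simp only [ones_consSeq]
  push_cast
  field_simp

/-- The characteristic word of slope `ρ`, described by its partial sums. As words are indexed from
`0`, its letter at position `n` is `⌊(n + 2) * ρ⌋ - ⌊(n + 1) * ρ⌋`. -/
def IsCharacteristicWord (u : ℕ → Bool) (ρ : ℝ) : Prop :=
  ∀ n : ℕ, ones u n = ⌊((n : ℝ) + 1) * ρ⌋

lemma IsStandard.isCharacteristicWord (hu : IsStandard u) (hρ : HasFreq u true ρ)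
    (hirr : Irrational ρ) : IsCharacteristicWord u ρ := by
  intro n
  have hfalse := hu.2.1.balanced.abs_ones_sub_le (hρ.cons false) (n + 1)
  have htrue := hu.2.2.balanced.abs_ones_sub_le (hρ.cons true) (n + 1)
  simp only [ones_consSeq, Bool.false_eq_true, reduceIte, abs_le] at hfalse htrue
  push_cast at hfalse htrue
  have hne : ((n : ℝ) + 1) * ρ ≠ ((ones u n + 1 : ℤ) : ℝ) :=
    fun h => (hirr.natCast_mul n.succ_ne_zero).ne_int _ (by rw [← h]; push_cast; ring)
  refine (Int.floor_eq_iff.mpr ⟨by linarith, lt_of_le_of_ne ?_ ?_⟩).symm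
  · linarith
  · exact_mod_cast hne

end CharacteristicWord

section ContinuedFraction

variable {θ θ' : ℝ} {a : ℕ → ℕ}

lemma mul_le_half_of_one_div_eq {x y : ℝ} {b : ℕ} (hx : 0 < x) (hx' : x < 1)
    (hy : y < 1) (h : 1 / x = b + y) : x * y ≤ 1 / 2 := by
  have hb : (1 : ℝ) ≤ b := by
    have hone : 1 < 1 / x := (one_lt_div hx).mpr hx'
    have hpos : (0 : ℝ) < b := by linarith
    exact_mod_cast hpos
  have hmul : x * (b + y) = 1 := by rw [← h, mul_one_div_cancel hx.ne']
  nlinarith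

lemma abs_sub_eq_of_one_div_eq {x x' y y' b : ℝ} (hx : 0 < x) (hx' : 0 < x') (h : 1 / x = b + y)
    (h' : 1 / x' = b + y') : |x - x'| = x * x' * |y - y'| := by
  rw [show y - y' = 1 / x - 1 / x' by rw [h, h']; ring, ← abs_of_pos (mul_pos hx hx'), ← abs_mul,
    abs_sub_comm]
  congr 1
  field_simp

lemma HasCF.unique (h : HasCF θ a) (h' : HasCF θ' a) : θ = θ' := by
  obtain ⟨t, rfl, ht⟩ := h
  obtain ⟨s, rfl, hs⟩ := h'
  have hcontract (n : ℕ) : |t n - s n| ≤ 1 / 4 * |t (n + 2) - s (n + 2)| := by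
    obtain ⟨ht0, ht1, hteq⟩ := ht n
    obtain ⟨hs0, hs1, hseq⟩ := hs n
    obtain ⟨ht0', ht1', hteq'⟩ := ht (n + 1)
    obtain ⟨hs0', hs1', hseq'⟩ := hs (n + 1)
    have htle := mul_le_half_of_one_div_eq ht0 ht1 ht1' hteq
    have hsle := mul_le_half_of_one_div_eq hs0 hs1 hs1' hseq
    calc |t n - s n|
        = (t n * t (n + 1)) * (s n * s (n + 1)) * |t (n + 2) - s (n + 2)| := by
          rw [abs_sub_eq_of_one_div_eq ht0 hs0 hteq hseq,
            abs_sub_eq_of_one_div_eq ht0' hs0' hteq' hseq']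
          ring
      _ ≤ 1 / 2 * (1 / 2) * |t (n + 2) - s (n + 2)| := by gcongr
      _ = 1 / 4 * |t (n + 2) - s (n + 2)| := by ring
  have hiter (n : ℕ) : |t 0 - s 0| ≤ (1 / 4) ^ n * |t (2 * n) - s (2 * n)| := by
    induction n with
    | zero => simp
    | succ n ih =>
      calc |t 0 - s 0| ≤ (1 / 4) ^ n * |t (2 * n) - s (2 * n)| := ih
        _ ≤ (1 / 4) ^ n * (1 / 4 * |t (2 * n + 2) - s (2 * n + 2)|) := by gcongr; exact hcontract _
        _ = (1 / 4) ^ (n + 1) * |t (2 * (n + 1)) - s (2 * (n + 1))| := by ring_nf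
  have hbound (n : ℕ) : |t 0 - s 0| ≤ (1 / 4) ^ n := by
    obtain ⟨ht0, ht1, -⟩ := ht (2 * n)
    obtain ⟨hs0, hs1, -⟩ := hs (2 * n)
    refine (hiter n).trans (mul_le_of_le_one_right (by positivity) ?_)
    rw [abs_le]
    constructor <;> linarith
  have hzero : |t 0 - s 0| ≤ 0 := ge_of_tendsto' (tendsto_pow_atTop_nhds_zero_of_lt_one
    (by norm_num) (by norm_num)) hbound
  exact sub_eq_zero.mp (abs_nonpos_iff.mp hzero)

lemma HasSlope.hasFreq_true {u : ℕ → Bool} (h : HasSlope u θ) :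
    HasFreq u true (1 / (1 + θ)) := by
  obtain ⟨ρ, ρ', hρ, hρ', hlt, rfl⟩ := h
  have hsum : ρ + ρ' = 1 := by
    refine tendsto_nhds_unique (hρ.add hρ') (tendsto_const_nhds.congr' ?_)
    filter_upwards [eventually_gt_atTop 0] with n hn
    have hn' : (n : ℝ) ≠ 0 := by exact_mod_cast hn.ne'
    rw [← add_div, ← Nat.cast_add, List.count_false_add_count_true, length_factorAt, div_self hn']
  have hne : ρ' ≠ 0 := by
    rintro rfl
    linarith
  rwa [one_add_div hne, add_comm, hsum, one_div_one_div]

end ContinuedFraction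

section Rotation

variable {u : ℕ → Bool} {ρ g : ℝ} {i p r r' : ℕ}

lemma abs_convergent_error_le {P P' Q Q' q t : ℤ} (hdet : (Q * P' - Q' * P) ^ 2 = 1)
    (hopp : (Q * ρ - P) * (Q' * ρ - P') ≤ 0) (hQ : 0 < Q) (hq : 0 < q) (hqQ' : q < Q') :
    |Q * ρ - P| ≤ |q * ρ - t| := by
  obtain ⟨x, y, hqxy, htxy⟩ : ∃ x y : ℤ, q = x * Q + y * Q' ∧ t = x * P + y * P' :=
    ⟨(Q * P' - Q' * P) * (q * P' - t * Q'), (Q * P' - Q' * P) * (Q * t - P * q),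
      by linear_combination -q * hdet, by linear_combination -t * hdet⟩
  have hx : x ≠ 0 := by
    rintro rfl
    have : 0 < y := by nlinarith
    nlinarith
  -- As `x` and `y` have opposite signs, the errors of the two convergents add up.
  have hxy : x * y ≤ 0 := by
    by_contra! hpos
    rcases pos_and_pos_or_neg_and_neg_of_mul_pos hpos with ⟨hx, hy⟩ | ⟨hx, hy⟩ <;> nlinarith
  have hxy' : (x * y : ℝ) ≤ 0 := by exact_mod_cast hxy
  have hsame : 0 ≤ x * (Q * ρ - P) * (y * (Q' * ρ - P')) := by
    linarith [mul_nonneg_of_nonpos_of_nonpos hxy' hopp]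
  have hx' : (1 : ℝ) ≤ |(x : ℝ)| := by exact_mod_cast Int.one_le_abs hx
  calc |Q * ρ - P| ≤ |(x : ℝ)| * |Q * ρ - P| := le_mul_of_one_le_left (abs_nonneg _) hx'
    _ = |x * (Q * ρ - P)| := (abs_mul _ _).symm
    _ ≤ |x * (Q * ρ - P) + y * (Q' * ρ - P')| := by
      rw [abs_add_eq_add_abs_iff _ _ |>.mpr (mul_nonneg_iff.mp hsame)]
      exact le_add_of_nonneg_right (abs_nonneg _)
    _ = |q * ρ - t| := by
      rw [hqxy, htxy]
      push_cast
      ring_nf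

/-- Every half-open arc of length `g` of the circle `ℝ / ℤ` contains one of the points `-j * ρ`,
`j ≤ r`. -/
def IsRotationNet (ρ g : ℝ) (r : ℕ) : Prop :=
  ∀ x : ℝ, ∃ j ≤ r, ∃ n : ℤ, x + j * ρ < n ∧ n ≤ x + g + j * ρ

lemma IsRotationNet.mono {g' : ℝ} (h : IsRotationNet ρ g r) (hg : g ≤ g') (hr : r ≤ r') :
    IsRotationNet ρ g' r' := by
  intro x
  obtain ⟨j, hj, n, hlt, hle⟩ := h x
  exact ⟨j, hj.trans hr, n, hlt, by linarith⟩

lemma isRotationNet_one_zero (ρ : ℝ) : IsRotationNet ρ 1 0 := by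
  refine fun x => ⟨0, le_rfl, ⌊x⌋ + 1, ?_, ?_⟩
  · simp
  · simpa using Int.floor_le x

-- If the arc of length `G` extending a given arc of length `g` captures a point outside the latter,
-- then translating this point by `|Q * ρ - P|` moves it inside.
lemma IsRotationNet.refine {G : ℝ} {Q : ℕ} {P : ℤ} (h : IsRotationNet ρ G r)
    (hG : G ≤ g + |Q * ρ - P|) (hg : |Q * ρ - P| ≤ g) : IsRotationNet ρ g (r + Q) := by
  intro x
  rcases abs_cases (Q * ρ - P) with ⟨hsign, -⟩ | ⟨hsign, -⟩
  · obtain ⟨j, hj, n, hlt, hle⟩ := h x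
    by_cases hn : (n : ℝ) ≤ x + g + j * ρ
    · exact ⟨j, by omega, n, hlt, hn⟩
    · refine ⟨j + Q, by omega, n + P, ?_, ?_⟩ <;> push_cast <;> linarith
  · obtain ⟨j, hj, n, hlt, hle⟩ := h (x + g - G)
    by_cases hn : x + j * ρ < n
    · exact ⟨j, by omega, n, hn, by linarith⟩
    · refine ⟨j + Q, by omega, n + P, ?_, ?_⟩ <;> push_cast <;> linarith

lemma IsCharacteristicWord.ones_le (hu : IsCharacteristicWord u ρ) (n : ℕ) :
    (ones u n : ℝ) ≤ (n + 1) * ρ :=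
  hu n ▸ Int.floor_le _

lemma IsCharacteristicWord.lt_ones_add_one (hu : IsCharacteristicWord u ρ) (n : ℕ) :
    (n + 1) * ρ < ones u n + 1 :=
  hu n ▸ Int.lt_floor_add_one _

lemma IsCharacteristicWord.not_isRotationNet (hu : IsCharacteristicWord u ρ) {T : ℤ}
    (h : ∀ j ≤ r, ones u (i + j + p) - ones u (i + j) = T) :
    ¬ IsRotationNet ρ |p * ρ - T| r := by
  intro hnet
  have hT (j : ℕ) (hj : j ≤ r) : (ones u (i + j + p) : ℝ) = ones u (i + j) + T := by
    exact_mod_cast (sub_eq_iff_eq_add'.mp (h j hj))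
  obtain ⟨j, n, hlt, hle⟩ : ∃ (j : ℕ) (n : ℤ), (ones u (i + j) : ℝ) < n ∧
      (n : ℝ) < ones u (i + j) + 1 := by
    rcases abs_cases (p * ρ - T) with ⟨hsign, -⟩ | ⟨hsign, -⟩
    · obtain ⟨j, hj, n, hlt, hle⟩ := hnet ((i + 1) * ρ)
      have hlow := hu.ones_le (i + j)
      have hupp := hu.lt_ones_add_one (i + j + p)
      rw [hT j hj] at hupp
      push_cast at hlow hupp
      exact ⟨j, n, by linarith, by linarith⟩
    · obtain ⟨j, hj, n, hlt, hle⟩ := hnet ((i + p + 1) * ρ - T)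
      have hlow := hu.ones_le (i + j + p)
      have hupp := hu.lt_ones_add_one (i + j)
      rw [hT j hj] at hlow
      push_cast at hlow hupp
      exact ⟨j, n, by linarith, by linarith⟩
  norm_cast at hlt hle
  omega

lemma IsCharacteristicWord.abs_lt_of_run_true (hu : IsCharacteristicWord u ρ)
    (h : ones u (i + r) = ones u i + r) (h' : ones u (i + p + r) = ones u (i + p) + r) :
    |p * ρ - (ones u (i + p) - ones u i)| < 1 - r * (1 - ρ) := by
  have hlow := hu.ones_le (i + r)
  have hupp := hu.lt_ones_add_one i
  have hlow' := hu.ones_le (i + p + r)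
  have hupp' := hu.lt_ones_add_one (i + p)
  rw [h] at hlow
  rw [h'] at hlow'
  push_cast at hlow hupp hlow' hupp'
  rw [abs_lt]
  constructor <;> linarith

lemma IsCharacteristicWord.abs_lt_of_run_false (hu : IsCharacteristicWord u ρ)
    (h : ones u (i + r) = ones u i) (h' : ones u (i + p + r) = ones u (i + p)) :
    |p * ρ - (ones u (i + p) - ones u i)| < 1 - r * ρ := by
  have hlow := hu.ones_le i
  have hupp := hu.lt_ones_add_one (i + r)
  have hlow' := hu.ones_le (i + p)
  have hupp' := hu.lt_ones_add_one (i + p + r)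
  rw [h] at hupp
  rw [h'] at hupp'
  push_cast at hlow hupp hlow' hupp'
  rw [abs_lt]
  constructor <;> linarith

end Rotation

section Golden

local notation "τ" => Real.goldenRatio⁻¹

lemma inv_goldenRatio_sq : τ ^ 2 = 1 - τ := by
  rw [Real.inv_goldenRatio, neg_sq, Real.goldenConj_sq]
  ring

lemma inv_goldenRatio_pos : 0 < τ := inv_pos.mpr Real.goldenRatio_pos

lemma inv_goldenRatio_bounds : 0.6180 < τ ∧ τ < 0.61804 := by
  have := inv_goldenRatio_sq
  have := inv_goldenRatio_pos
  constructor <;> nlinarith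

lemma one_div_inv_goldenRatio : 1 / τ = 1 + τ := by
  rw [div_eq_iff inv_goldenRatio_pos.ne']
  linarith [inv_goldenRatio_sq]

lemma hasCF_one_nat_golden {k : ℕ} {a : ℕ → ℕ} (hk : 1 ≤ k) (h1 : a 1 = 1) (h2 : a 2 = k)
    (h : ∀ n, 3 ≤ n → a n = 1) : HasCF ((k + τ) / (k + 1 + τ)) a := by
  have hτ := inv_goldenRatio_pos
  have hk' : (1 : ℝ) ≤ k := by exact_mod_cast hk
  refine ⟨fun | 0 => (k + τ) / (k + 1 + τ) | 1 => 1 / (k + τ) | _ + 2 => τ, rfl, ?_⟩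
  rintro (_ | _ | n)
  · refine ⟨by positivity, (div_lt_one (by positivity)).mpr (by linarith), ?_⟩
    simp only [zero_add, h1, Nat.cast_one]
    field_simp
    ring
  · refine ⟨by positivity, (div_lt_one (by positivity)).mpr (by linarith), ?_⟩
    simp only [zero_add, one_add_one_eq_two, h2]
    exact one_div_one_div _
  · refine ⟨hτ, inv_goldenRatio_bounds.2.trans (by norm_num), ?_⟩
    rw [h _ (by omega), Nat.cast_one]
    exact one_div_inv_goldenRatio

/-- The generalized Fibonacci sequence with initial values `a` and `b`. -/
def gibonacci (a b : ℕ) : ℕ → ℕ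
  | 0 => a
  | 1 => b
  | n + 2 => gibonacci a b (n + 1) + gibonacci a b n

lemma gibonacci_add_two (a b n : ℕ) :
    gibonacci a b (n + 2) = gibonacci a b (n + 1) + gibonacci a b n := rfl

lemma gibonacci_pos {a b : ℕ} (ha : 0 < a) (hb : 0 < b) : ∀ n, 0 < gibonacci a b n
  | 0 => ha
  | 1 => hb
  | n + 2 => Nat.add_pos_right _ (gibonacci_pos ha hb n)

lemma strictMono_gibonacci {a b : ℕ} (ha : 0 < a) (hab : a < b) : StrictMono (gibonacci a b) := by
  refine strictMono_nat_of_lt_succ fun n => ?_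
  rcases n with _ | n
  · exact hab
  · exact Nat.lt_add_of_pos_right (gibonacci_pos ha (ha.trans hab) n)

lemma gibonacci_det (a b c d n : ℕ) :
    (gibonacci a b n * gibonacci c d (n + 1) - gibonacci a b (n + 1) * gibonacci c d n : ℤ) =
      (-1) ^ n * (a * d - b * c) := by
  induction n with
  | zero => simp [gibonacci]
  | succ n ih =>
    rw [gibonacci_add_two, gibonacci_add_two, pow_succ]
    push_cast
    linear_combination -ih

lemma gibonacci_mul_sub {a b c d : ℕ} {ρ : ℝ} (h : b * ρ - d = -τ * (a * ρ - c)) :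
    ∀ n, gibonacci a b n * ρ - gibonacci c d n = (-τ) ^ n * (a * ρ - c)
  | 0 => by simp [gibonacci]
  | 1 => by simpa [gibonacci] using h
  | n + 2 => by
    have ih := gibonacci_mul_sub h n
    have ih' := gibonacci_mul_sub h (n + 1)
    rw [gibonacci_add_two, gibonacci_add_two]
    push_cast
    linear_combination ih + ih' - (-τ) ^ n * (a * ρ - c) * inv_goldenRatio_sq

/-- The amount by which the frequency of `b` exceeds that of `a` in a standard sequence of slope
`[0, 1, k, 1, 1, 1, …]`. -/
noncomputable def freqGap (k : ℕ) : ℝ := 1 / (2 * k + 1 + 2 * τ)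

/-- The frequency of `b` in a standard sequence of slope `[0, 1, k, 1, 1, 1, …]`. -/
noncomputable def freqB (k : ℕ) : ℝ := (1 + freqGap k) / 2

/-- The denominators of the convergents of `freqB k`, starting from `1 / 2`. -/
def convDen (k : ℕ) : ℕ → ℕ := gibonacci 2 (2 * k + 1)

/-- The numerators of the convergents of `freqB k`, starting from `1 / 2`. -/
def convNum (k : ℕ) : ℕ → ℕ := gibonacci 1 (k + 1)

variable {k n : ℕ}

lemma freqGap_pos (k : ℕ) : 0 < freqGap k := by
  have := inv_goldenRatio_pos
  unfold freqGap
  positivity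

lemma freqGap_eq (k : ℕ) : (2 * k + 1 + 2 * τ) * freqGap k = 1 := by
  have := inv_goldenRatio_pos
  rw [freqGap, mul_one_div_cancel (by positivity)]

lemma freqB_eq_one_div (k : ℕ) : freqB k = 1 / (1 + (k + τ) / (k + 1 + τ)) := by
  have := inv_goldenRatio_pos
  unfold freqB freqGap
  field_simp
  ring

lemma irrational_freqB (k : ℕ) : Irrational (freqB k) := by
  have hτ : Irrational τ := irrational_inv_iff.mpr Real.goldenRatio_irrational
  have hden : Irrational (((2 * k + 1 : ℕ) : ℝ) + (2 : ℕ) * τ) :=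
    (hτ.natCast_mul two_ne_zero).natCast_add _
  have hgap : Irrational (freqGap k) := by
    have := irrational_inv_iff.mpr hden
    push_cast at this
    rwa [freqGap, one_div]
  have := (hgap.natCast_add 1).div_natCast two_ne_zero
  exact_mod_cast this

lemma convDen_pos (k n : ℕ) : 0 < convDen k n := gibonacci_pos two_pos (Nat.succ_pos _) n

lemma strictMono_convDen (hk : 1 ≤ k) : StrictMono (convDen k) :=
  strictMono_gibonacci two_pos (by omega)

lemma convDen_zero (k : ℕ) : convDen k 0 = 2 := rfl

lemma convDen_two (k : ℕ) : convDen k 2 = 2 * k + 3 := rfl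

lemma convDen_three (k : ℕ) : convDen k 3 = 4 * k + 4 := by
  change 2 * k + 1 + 2 + (2 * k + 1) = _
  ring

lemma convDen_mul_sub (k n : ℕ) : convDen k n * freqB k - convNum k n = (-τ) ^ n * freqGap k := by
  have hstart : ((2 : ℕ) : ℝ) * freqB k - (1 : ℕ) = freqGap k := by
    rw [freqB]
    push_cast
    ring
  rw [← hstart]
  refine gibonacci_mul_sub ?_ n
  rw [hstart, freqB]
  push_cast
  linear_combination freqGap_eq k / 2

lemma abs_convDen_mul_sub (k n : ℕ) :
    |convDen k n * freqB k - (convNum k n : ℤ)| = τ ^ n * freqGap k := by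
  rw [Int.cast_natCast, convDen_mul_sub, abs_mul, abs_pow, abs_neg,
    abs_of_pos inv_goldenRatio_pos, abs_of_pos (freqGap_pos k)]

lemma pow_mul_freqGap_le {q t : ℤ} (hq : 0 < q) (hqn : q < convDen k (n + 1)) :
    τ ^ n * freqGap k ≤ |q * freqB k - t| := by
  have hbest := abs_convergent_error_le (ρ := freqB k) (P := convNum k n) (P' := convNum k (n + 1))
    (Q := convDen k n) (t := t) ?_ ?_ (by exact_mod_cast convDen_pos k n) hq hqn
  · rwa [Int.cast_natCast, abs_convDen_mul_sub] at hbest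
  · rw [convDen, convNum, gibonacci_det, mul_pow, ← pow_mul, mul_comm n, pow_mul]
    push_cast
    ring
  · simp only [Int.cast_natCast, convDen_mul_sub]
    have : 0 ≤ ((-τ) ^ n * freqGap k) ^ 2 * τ :=
      mul_nonneg (sq_nonneg _) inv_goldenRatio_pos.le
    rw [pow_succ]
    linarith

lemma isRotationNet_freqB_linear {i : ℕ} (hi : i + 1 ≤ k) :
    IsRotationNet (freqB k) ((k + τ - i) * freqGap k) (2 * i + 2) := by
  have hτ := inv_goldenRatio_pos
  have hgap := freqGap_eq k
  have hpos := freqGap_pos k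
  have hk : ((i : ℝ) + 1) ≤ k := by exact_mod_cast hi
  induction i with
  | zero =>
    have herr : |((1 : ℕ) : ℝ) * freqB k - (1 : ℤ)| = (k + τ) * freqGap k := by
      rw [abs_sub_comm, abs_of_nonneg] <;> push_cast <;> rw [freqB]
      · linear_combination -hgap / 2
      · nlinarith
    have hnet := (isRotationNet_one_zero (freqB k)).refine (g := (k + 1 + τ) * freqGap k)
      (Q := 1) (P := 1) (by rw [herr]; linarith) (by rw [herr]; gcongr; linarith)
    have hnet' := hnet.refine (g := (k + τ) * freqGap k)
      (Q := 1) (P := 1) (by rw [herr]; push_cast at hk; nlinarith) herr.le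
    simpa using hnet'
  | succ i ih =>
    push_cast at hk ⊢
    have herr := abs_convDen_mul_sub k 0
    rw [pow_zero, one_mul] at herr
    exact (ih (by omega) (by linarith)).refine (Q := convDen k 0) (by rw [herr]; linarith)
      (by rw [herr]; nlinarith)

lemma isRotationNet_freqB_pow (hk : 1 ≤ k) (n : ℕ) :
    IsRotationNet (freqB k) (τ ^ n * freqGap k) (convDen k (n + 2) - 1) := by
  induction n with
  | zero =>
    have herr := abs_convDen_mul_sub k 0
    have hnet := isRotationNet_freqB_linear (k := k) (i := k - 1) (by omega)
    refine (hnet.refine ?_ herr.le).mono le_rfl ?_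
    · rw [herr, Nat.cast_sub hk]
      have := freqGap_pos k
      have := inv_goldenRatio_bounds.2
      push_cast
      nlinarith
    · rw [convDen_zero, convDen_two]
      omega
  | succ n ih =>
    have herr := abs_convDen_mul_sub k (n + 1)
    refine (ih.refine ?_ herr.le).mono le_rfl ?_
    · rw [herr, pow_succ]
      have : 0 < τ ^ n * freqGap k := mul_pos (pow_pos inv_goldenRatio_pos n) (freqGap_pos k)
      nlinarith [inv_goldenRatio_bounds.1]
    · have := convDen_pos k (n + 2)
      have : convDen k (n + 1 + 2) = convDen k (n + 2) + convDen k (n + 1) :=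
        gibonacci_add_two _ _ _
      omega

lemma exists_convDen_le_lt {q : ℤ} (hk : 1 ≤ k) :
    ∃ n, q < convDen k (n + 1) ∧ (n ≠ 0 → convDen k n ≤ q) := by
  classical
  have hex : ∃ n, q < convDen k (n + 1) :=
    ⟨q.toNat, by have := (strictMono_convDen hk).le_apply (x := q.toNat + 1); omega⟩
  refine ⟨Nat.find hex, Nat.find_spec hex, fun hne => ?_⟩
  have := Nat.find_min hex (Nat.sub_one_lt hne)
  rwa [not_lt, Nat.sub_one_add_one hne] at this

lemma half_sub_quarter_add_inv_goldenRatio_le {δ : ℕ} (hδ : 7 ≤ δ) :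
    ((δ / 2 - δ / 2 / 2 : ℕ) : ℝ) + τ ≤ δ * τ ^ 2 := by
  have hδ' : (7 : ℝ) ≤ δ := by exact_mod_cast hδ
  have hτ := inv_goldenRatio_bounds.2
  rw [inv_goldenRatio_sq]
  rcases le_or_gt (δ / 2 - δ / 2 / 2) 2 with hle | hgt
  · have : ((δ / 2 - δ / 2 / 2 : ℕ) : ℝ) ≤ 2 := by exact_mod_cast hle
    nlinarith
  · have hlarge : ((9 : ℕ) : ℝ) ≤ δ := by exact_mod_cast (show 9 ≤ δ by omega)
    have : (4 * (δ / 2 - δ / 2 / 2) : ℕ) ≤ (δ : ℝ) + 2 := by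
      exact_mod_cast (show 4 * (δ / 2 - δ / 2 / 2) ≤ δ + 2 by omega)
    push_cast at this hlarge
    nlinarith

lemma one_le_mul_inv_goldenRatio_pow {δ : ℕ} (hδ : 7 ≤ δ) :
    1 ≤ δ * τ ^ 3 ∧ 1 ≤ δ * τ ^ 4 := by
  have hδ' : (7 : ℝ) ≤ δ := by exact_mod_cast hδ
  have h3 : τ ^ 3 = 2 * τ - 1 := by linear_combination (τ - 1) * inv_goldenRatio_sq
  have h4 : τ ^ 4 = 2 - 3 * τ := by linear_combination (τ ^ 2 - τ + 2) * inv_goldenRatio_sq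
  have := inv_goldenRatio_bounds
  rw [h3, h4]
  constructor <;> nlinarith

lemma exists_isRotationNet_freqB {δ r : ℕ} {q : ℤ} (hδ : 7 ≤ δ) (hr : 2 ≤ r) (hqr : q < 2 * r) :
    ∃ n, q < convDen (δ / 2) (n + 1) ∧
      IsRotationNet (freqB (δ / 2)) (δ * (τ ^ n * freqGap (δ / 2))) r := by
  set k := δ / 2 with hk
  have hδk : (2 * k : ℝ) ≤ δ := by exact_mod_cast (show 2 * k ≤ δ by omega)
  have hδ' : (7 : ℝ) ≤ δ := by exact_mod_cast hδ
  have hτ := inv_goldenRatio_bounds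
  have hmono := strictMono_convDen (k := k) (by omega)
  obtain ⟨n, hlt, hle⟩ := exists_convDen_le_lt (k := k) (q := q) (by omega)
  refine ⟨n, hlt, ?_⟩
  rw [← mul_assoc]
  suffices ∃ G r', IsRotationNet (freqB k) (G * freqGap k) r' ∧ r' ≤ r ∧ G ≤ δ * τ ^ n by
    obtain ⟨G, r', hnet, hr', hG⟩ := this
    exact hnet.mono (mul_le_mul_of_nonneg_right hG (freqGap_pos k).le) hr'
  rcases n with _ | _ | _ | _ | n
  · exact ⟨_, _, isRotationNet_freqB_linear (i := 0) (by omega), hr,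
      by push_cast; rw [pow_zero]; linarith⟩
  · exact ⟨_, _, isRotationNet_freqB_linear (i := 0) (by omega), hr,
      by push_cast; rw [pow_one]; nlinarith⟩
  · have := hle (by omega)
    rw [zero_add, convDen_two] at this
    refine ⟨_, _, isRotationNet_freqB_linear (i := k / 2) (by omega), by omega, ?_⟩
    refine le_of_eq_of_le ?_ (half_sub_quarter_add_inv_goldenRatio_le hδ)
    rw [← hk, Nat.cast_sub (by omega)]
    ring
  · have := hle (by omega)
    rw [zero_add, convDen_three] at this
    refine ⟨_, _, isRotationNet_freqB_pow (by omega) 0, by rw [convDen_two]; omega, ?_⟩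
    rw [pow_zero]
    exact (one_le_mul_inv_goldenRatio_pow hδ).1
  · have : (convDen k (n + 4) : ℤ) ≤ q := hle (by omega)
    refine ⟨_, _, isRotationNet_freqB_pow (by omega) n, ?_, ?_⟩
    · have hsum : convDen k (n + 4) = convDen k (n + 3) + convDen k (n + 2) :=
        gibonacci_add_two _ _ _
      have : convDen k (n + 2) < convDen k (n + 3) := hmono (Nat.lt_succ_self _)
      omega
    · change τ ^ n ≤ δ * τ ^ (n + 4)
      rw [pow_add]
      nlinarith [(one_le_mul_inv_goldenRatio_pow hδ).2, pow_pos inv_goldenRatio_pos n]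

lemma isRotationNet_freqB_mul_abs {δ r : ℕ} {q t : ℤ} (hδ : 7 ≤ δ) (hr : 2 ≤ r) (hq : 0 < q)
    (hqr : q < 2 * r) :
    IsRotationNet (freqB (δ / 2)) (δ * |q * freqB (δ / 2) - t|) r := by
  obtain ⟨n, hqn, hnet⟩ := exists_isRotationNet_freqB hδ hr hqr
  exact hnet.mono (by gcongr; exact pow_mul_freqGap_le hq hqn) le_rfl

lemma HasSlope.hasFreq_freqB {u : ℕ → Bool} {θ : ℝ} {a : ℕ → ℕ} (hu : HasSlope u θ)
    (hcf : HasCF θ a) (hk : 1 ≤ k) (h1 : a 1 = 1) (h2 : a 2 = k) (h : ∀ n, 3 ≤ n → a n = 1) :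
    HasFreq u true (freqB k) := by
  rw [freqB_eq_one_div, ← hcf.unique (hasCF_one_nat_golden hk h1 h2 h)]
  exact hu.hasFreq_true

lemma freqGap_half_bounds {δ : ℕ} (hδ : 7 ≤ δ) :
    0 < freqGap (δ / 2) ∧ freqGap (δ / 2) < 1 / 8 ∧
      1 - 2.24 * freqGap (δ / 2) ≤ δ * freqGap (δ / 2) ∧
      δ * freqGap (δ / 2) ≤ 1 - 1.23 * freqGap (δ / 2) := by
  have hτ := inv_goldenRatio_bounds
  have hpos := freqGap_pos (δ / 2)
  have hgap := freqGap_eq (δ / 2)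
  have hk : (3 : ℝ) ≤ (δ / 2 : ℕ) := by exact_mod_cast (show 3 ≤ δ / 2 by omega)
  have hδk : (2 * (δ / 2 : ℕ) : ℝ) ≤ δ := by exact_mod_cast (show 2 * (δ / 2) ≤ δ by omega)
  have hδk' : (δ : ℝ) ≤ 2 * (δ / 2 : ℕ) + 1 := by
    exact_mod_cast (show δ ≤ 2 * (δ / 2) + 1 by omega)
  refine ⟨hpos, ?_, ?_, ?_⟩ <;> nlinarith

end Golden

section Colouring

variable {u : ℕ → Bool} {δ : ℕ}

/-- A strengthening of balance that compares factors of different lengths: a factor contains at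
most one occurrence of a letter more than any factor which is at most one letter shorter. -/
def StronglyBalanced [DecidableEq α] (y : ℕ → α) : Prop :=
  ∀ (c : α) (i j m n : ℕ), m ≤ n + 1 → (factorAt y i m).count c ≤ (factorAt y j n).count c + 1

-- `countP` serves for a count over `α ⊕ β`, whose `BEq` instance is not the one in `Balanced`.
lemma balanced_iff_countP_le [DecidableEq α] {v : ℕ → α} :
    Balanced v ↔ ∀ c i j n,
      (factorAt v i n).countP (· = c) ≤ (factorAt v j n).countP (· = c) + 1 := by
  constructor
  · intro h c i j n
    have : |((factorAt v i n).countP (· = c) : ℤ) - (factorAt v j n).countP (· = c)| ≤ 1 :=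
      h c _ _ (isFactor_factorAt v i n) (isFactor_factorAt v j n) (by simp only [length_factorAt])
    rw [abs_le] at this
    omega
  · rintro h c w w' ⟨i, hi⟩ ⟨j, hj⟩ hlen
    change |(w.countP (· = c) : ℤ) - w'.countP (· = c)| ≤ 1
    have hij := h c i j w.length
    have hji := h c j i w.length
    rw [hi, hlen, hj] at hij hji
    rw [abs_le]
    constructor <;> omega

lemma countP_inl_factorAt_colour [DecidableEq α] [DecidableEq β] (u : ℕ → Bool) (y : ℕ → α)
    (y' : ℕ → β) (c : α) (i n : ℕ) :
    (factorAt (colour u y y') i n).countP (· = Sum.inl c) =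
      (factorAt y (countBefore u false i) ((factorAt u i n).count false)).count c := by
  induction n with
  | zero => rfl
  | succ n ih =>
    rw [factorAt_succ, factorAt_succ, List.countP_append, List.count_append, ih]
    by_cases h : u (i + n) = false
    · simp [colour, h, factorAt_succ, countBefore_add, List.count_singleton]
    · simp [colour, h]

lemma countP_inr_factorAt_colour [DecidableEq α] [DecidableEq β] (u : ℕ → Bool) (y : ℕ → α)
    (y' : ℕ → β) (c : β) (i n : ℕ) :
    (factorAt (colour u y y') i n).countP (· = Sum.inr c) =
      (factorAt y' (countBefore u true i) ((factorAt u i n).count true)).count c := by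
  induction n with
  | zero => rfl
  | succ n ih =>
    rw [factorAt_succ, factorAt_succ, List.countP_append, List.count_append, ih]
    by_cases h : u (i + n) = true
    · simp [colour, h, factorAt_succ, countBefore_add, List.count_singleton]
    · simp [colour, h]

lemma balanced_colour [DecidableEq α] [DecidableEq β] {y : ℕ → α} {y' : ℕ → β} (hu : Balanced u)
    (hy : StronglyBalanced y) (hy' : StronglyBalanced y') : Balanced (colour u y y') := by
  rw [balanced_iff_countP_le] at hu ⊢
  rintro (c | c) i j n
  · rw [countP_inl_factorAt_colour, countP_inl_factorAt_colour]
    exact hy c _ _ _ _ (hu false i j n)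
  · rw [countP_inr_factorAt_colour, countP_inr_factorAt_colour]
    exact hy' c _ _ _ _ (hu true i j n)

lemma count_factorAt_cyc [NeZero δ] (c : ZMod δ) (i n : ℕ) :
    (factorAt (cyc δ) i n).count c = Nat.count (· ≡ (c - i).val [MOD δ]) n := by
  induction n with
  | zero => rfl
  | succ n ih =>
    have hletter : cyc δ (i + n) = c ↔ n ≡ (c - i).val [MOD δ] := by
      rw [← ZMod.natCast_eq_natCast_iff, ZMod.natCast_zmod_val, eq_sub_iff_add_eq, cyc,
        Nat.cast_add, add_comm]
    rw [factorAt_succ, List.count_append, ih, List.count_singleton, Nat.count_succ]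
    simp only [beq_iff_eq, hletter]

lemma stronglyBalanced_cyc [NeZero δ] : StronglyBalanced (cyc δ) := by
  intro c i j m n hmn
  have hδ : 0 < δ := NeZero.pos δ
  have hm := Nat.div_add_mod m δ
  rw [count_factorAt_cyc, count_factorAt_cyc, Nat.count_modEq_card _ hδ,
    Nat.count_modEq_card _ hδ]
  calc _ ≤ (m + δ - 1) / δ := by
        rw [Nat.le_div_iff_mul_le hδ, add_mul, mul_comm (m / δ)]
        split_ifs <;> omega
    _ ≤ (n + δ) / δ := Nat.div_le_div_right (by omega)
    _ = n / δ + 1 := Nat.add_div_right n hδ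
    _ ≤ _ := by omega

lemma colour_eq_colour_iff {y : ℕ → α} {y' : ℕ → β} {m n : ℕ} :
    colour u y y' m = colour u y y' n ↔ u m = u n ∧
      (u m = false → y (countBefore u false m) = y (countBefore u false n)) ∧
      (u m = true → y' (countBefore u true m) = y' (countBefore u true n)) := by
  cases hm : u m <;> cases hn : u n <;> simp [colour, hm, hn]

lemma colourCyc_eq_colourCyc_iff {m n : ℕ} :
    colourCyc δ u m = colourCyc δ u n ↔ u m = u n ∧
      (u m = false → (δ : ℤ) ∣ n - m - (ones u n - ones u m)) ∧
      (u m = true → (δ : ℤ) ∣ ones u n - ones u m) := by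
  have hcyc (c : Bool) : cyc δ (countBefore u c m) = cyc δ (countBefore u c n) ↔
      (δ : ℤ) ∣ countBefore u c n - countBefore u c m := by
    rw [cyc, cyc, ZMod.natCast_eq_natCast_iff, Nat.modEq_iff_dvd]
  rw [colourCyc, colour_eq_colour_iff, hcyc, hcyc, countBefore_false_eq, countBefore_false_eq,
    sub_sub_sub_comm]
  rfl

end Colouring

section Repetitions

variable {u : ℕ → Bool} {δ i j p r : ℕ}

lemma ones_add_of_forall_true (h : ∀ j < r, u (i + j) = true) : ones u (i + r) = ones u i + r := by
  induction r with
  | zero => simp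
  | succ r ih =>
    rw [← add_assoc, ones_succ, ih fun j hj => h j (hj.trans r.lt_succ_self),
      if_pos (h r r.lt_succ_self), Nat.cast_succ, add_assoc]

lemma ones_add_of_forall_false (h : ∀ j < r, u (i + j) = false) : ones u (i + r) = ones u i := by
  induction r with
  | zero => rfl
  | succ r ih =>
    rw [← add_assoc, ones_succ, ih fun j hj => h j (hj.trans r.lt_succ_self),
      if_neg (Bool.not_eq_true _ ▸ h r r.lt_succ_self), add_zero]

lemma IsRepetition.ones_sub_eq (h : IsRepetition u i p r) (hj : j ≤ r) :
    ones u (i + j + p) - ones u (i + j) = ones u (i + p) - ones u i := by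
  induction j with
  | zero => rfl
  | succ j ih =>
    have hletter := h j (by omega)
    rw [← add_assoc, add_right_comm, ones_succ, ones_succ, ← hletter]
    linarith [ih (by omega)]

lemma IsRepetition.of_colourCyc (h : IsRepetition (colourCyc δ u) i p r) : IsRepetition u i p r :=
  fun j hj => (colourCyc_eq_colourCyc_iff.mp (h j hj)).1

lemma IsRepetition.dvd_ones_sub (h : IsRepetition (colourCyc δ u) i p r) (hj : j < r)
    (htrue : u (i + j) = true) : (δ : ℤ) ∣ ones u (i + p) - ones u i := by
  rw [← h.of_colourCyc.ones_sub_eq hj.le]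
  exact (colourCyc_eq_colourCyc_iff.mp (h j hj)).2.2 htrue

lemma IsRepetition.dvd_sub_ones_sub (h : IsRepetition (colourCyc δ u) i p r) (hj : j < r)
    (hfalse : u (i + j) = false) : (δ : ℤ) ∣ p - (ones u (i + p) - ones u i) := by
  rw [← h.of_colourCyc.ones_sub_eq hj.le]
  simpa using (colourCyc_eq_colourCyc_iff.mp (h j hj)).2.1 hfalse

lemma mul_le_of_abs_lt_run_true {p t : ℤ} (hδ : 7 ≤ δ) (hr : 0 < r) (hp : 0 < p)
    (h : |p * freqB (δ / 2) - δ * t| < 1 - r * (1 - freqB (δ / 2))) : r * (2 * δ - 2) ≤ p := by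
  obtain ⟨he, he', hδe, hδe'⟩ := freqGap_half_bounds hδ
  unfold freqB at h
  set e := freqGap (δ / 2)
  have hδ' : (7 : ℝ) ≤ δ := by exact_mod_cast hδ
  have hr' : (1 : ℝ) ≤ r := by exact_mod_cast hr
  have hp' : (1 : ℝ) ≤ p := by exact_mod_cast hp
  have hr3 : r < 3 := by
    have := (abs_nonneg _).trans_lt h
    have : (r : ℝ) < 3 := by nlinarith
    exact_mod_cast this
  obtain ⟨hlow, hupp⟩ := abs_lt.mp h
  have ht : 1 ≤ t := by
    have : (0 : ℝ) < δ * t := by nlinarith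
    exact_mod_cast pos_of_mul_pos_right this (by linarith)
  have ht' : (1 : ℝ) ≤ t := by exact_mod_cast ht
  by_contra! hlt
  have hlt' : (p : ℝ) + 1 ≤ r * (2 * δ - 2) := by exact_mod_cast hlt
  interval_cases r
  · push_cast at *
    nlinarith
  · push_cast at *
    have ht1 : t = 1 := by
      have : (t : ℝ) < 2 := by nlinarith
      have : t < 2 := by exact_mod_cast this
      omega
    rw [ht1] at hlow hupp
    push_cast at hlow hupp
    rcases le_or_gt p (2 * δ - 2) with hle' | hgt
    · have : (p : ℝ) ≤ 2 * δ - 2 := by exact_mod_cast hle'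
      nlinarith
    · have : (2 * δ - 1 : ℝ) ≤ p := by exact_mod_cast (show 2 * (δ : ℤ) - 1 ≤ p by omega)
      nlinarith

lemma mul_le_of_abs_lt_run_false {p s : ℤ} (hδ : 7 ≤ δ) (hr : 0 < r) (hp : 0 < p)
    (h : |p * freqB (δ / 2) - (p - δ * s)| < 1 - r * freqB (δ / 2)) : r * (2 * δ - 2) ≤ p := by
  obtain ⟨he, he', -, -⟩ := freqGap_half_bounds hδ
  unfold freqB at h
  set e := freqGap (δ / 2)
  have hδ' : (7 : ℝ) ≤ δ := by exact_mod_cast hδ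
  have hp' : (1 : ℝ) ≤ p := by exact_mod_cast hp
  have hr2 : r < 2 := by
    have := (abs_nonneg _).trans_lt h
    have : (r : ℝ) < 2 := by nlinarith
    exact_mod_cast this
  obtain rfl : r = 1 := by omega
  obtain ⟨hlow, hupp⟩ := abs_lt.mp h
  have hs : 1 ≤ s := by
    have : (0 : ℝ) < δ * s := by push_cast at hlow; nlinarith
    exact_mod_cast pos_of_mul_pos_right this (by linarith)
  have hs' : (1 : ℝ) ≤ s := by exact_mod_cast hs
  by_contra! hlt
  have hlt' : (p : ℝ) + 1 ≤ (1 : ℕ) * (2 * δ - 2) := by exact_mod_cast hlt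
  push_cast at *
  nlinarith

lemma IsCharacteristicWord.mul_le_of_isRepetition_of_dvd
    (hu : IsCharacteristicWord u (freqB (δ / 2))) (hδ : 7 ≤ δ) (hp : 0 < p) (hr : 2 ≤ r)
    (h : IsRepetition u i p r)
    (htrue : (δ : ℤ) ∣ ones u (i + p) - ones u i)
    (hfalse : (δ : ℤ) ∣ p - (ones u (i + p) - ones u i)) : δ * (2 * r) ≤ p := by
  obtain ⟨t, ht⟩ := htrue
  obtain ⟨q, hq⟩ : (δ : ℤ) ∣ p := by
    rw [← sub_add_cancel (p : ℤ) (ones u (i + p) - ones u i)]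
    exact dvd_add hfalse ⟨t, ht⟩
  by_contra! hlt
  have hq0 : 0 < q := pos_of_mul_pos_right (a := (δ : ℤ)) (by omega) (by omega)
  have hqr : q < 2 * r := by
    refine lt_of_mul_lt_mul_left (a := (δ : ℤ)) ?_ (by omega)
    rw [← hq]
    exact_mod_cast hlt
  refine hu.not_isRotationNet (i := i) (p := p) (T := δ * t)
    (fun j hj => (h.ones_sub_eq hj).trans ht) ?_
  have hscale : |(p : ℝ) * freqB (δ / 2) - (δ * t : ℤ)| = δ * |q * freqB (δ / 2) - t| := by
    have hq' : (p : ℝ) = δ * q := by exact_mod_cast hq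
    rw [hq', ← abs_of_nonneg (Nat.cast_nonneg' (α := ℝ) δ), ← abs_mul,
      abs_of_nonneg (Nat.cast_nonneg' (α := ℝ) δ)]
    push_cast
    ring_nf
  rw [hscale]
  exact isRotationNet_freqB_mul_abs hδ hr hq0 hqr

lemma IsCharacteristicWord.mul_le_of_isRepetition
    (hu : IsCharacteristicWord u (freqB (δ / 2))) (hδ : 7 ≤ δ) (hp : 0 < p)
    (h : IsRepetition (colourCyc δ u) i p r) : r * (2 * δ - 2) ≤ (p : ℤ) := by
  rcases r.eq_zero_or_pos with rfl | hr
  · simp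
  have hu' := h.of_colourCyc
  have hshift (j : ℕ) (hj : j < r) : u (i + p + j) = u (i + j) := by
    rw [hu' j hj, add_right_comm]
  by_cases htrue : ∀ j < r, u (i + j) = true
  · obtain ⟨t, ht⟩ := h.dvd_ones_sub hr (htrue 0 hr)
    have hrun := hu.abs_lt_of_run_true (ones_add_of_forall_true htrue)
      (ones_add_of_forall_true fun j hj => (hshift j hj).trans (htrue j hj))
    have ht' : (ones u (i + p) - ones u i : ℝ) = δ * t := by exact_mod_cast ht
    rw [ht'] at hrun
    exact mul_le_of_abs_lt_run_true hδ hr (by exact_mod_cast hp) (by exact_mod_cast hrun)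
  by_cases hfalse : ∀ j < r, u (i + j) = false
  · obtain ⟨s, hs⟩ := h.dvd_sub_ones_sub hr (hfalse 0 hr)
    have hrun := hu.abs_lt_of_run_false (ones_add_of_forall_false hfalse)
      (ones_add_of_forall_false fun j hj => (hshift j hj).trans (hfalse j hj))
    have hs' : (ones u (i + p) - ones u i : ℝ) = p - δ * s := by
      have : (p - (ones u (i + p) - ones u i) : ℝ) = δ * s := by exact_mod_cast hs
      linarith
    rw [hs'] at hrun
    exact mul_le_of_abs_lt_run_false hδ hr (by exact_mod_cast hp) (by exact_mod_cast hrun)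
  push Not at htrue hfalse
  obtain ⟨j, hj, hju⟩ := hfalse
  obtain ⟨l, hl, hlu⟩ := htrue
  have hr2 : 2 ≤ r := by
    by_contra! hlt
    obtain rfl : j = 0 := by omega
    obtain rfl : l = 0 := by omega
    simp_all
  have := hu.mul_le_of_isRepetition_of_dvd hδ hp hr2 hu' (h.dvd_ones_sub hj (by simpa using hju))
    (h.dvd_sub_ones_sub hl (by simpa using hlu))
  zify at this
  linarith

-- Advancing by `2 * δ - 2` letters moves the multiples of `freqB (δ / 2)` modulo `1` backwards by
-- at most `3.24 * freqGap (δ / 2)`. Position `6` leaves room for this shift, since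
-- `8 * freqB (δ / 2)` lies `4 * freqGap (δ / 2)` above an integer.
lemma IsCharacteristicWord.isRepetition_colourCyc
    (hu : IsCharacteristicWord u (freqB (δ / 2))) (hδ : 7 ≤ δ) :
    IsRepetition (colourCyc δ u) 6 (2 * δ - 2) 1 := by
  obtain ⟨he, he', hδe, hδe'⟩ := freqGap_half_bounds hδ
  unfold freqB at hu
  set e := freqGap (δ / 2)
  have h6 : ones u 6 = 3 := by
    rw [hu, Int.floor_eq_iff]
    push_cast
    constructor <;> nlinarith
  have h7 : ones u 7 = 4 := by
    rw [hu, Int.floor_eq_iff]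
    push_cast
    constructor <;> nlinarith
  have h6' : ones u (2 * δ + 4) = δ + 3 := by
    rw [hu, Int.floor_eq_iff]
    push_cast
    constructor <;> nlinarith
  have h7' : ones u (2 * δ + 5) = δ + 4 := by
    rw [hu, Int.floor_eq_iff]
    push_cast
    constructor <;> nlinarith
  have htrue : u 6 = true := by
    by_contra hne
    have := ones_succ u 6
    rw [if_neg hne, h6, h7] at this
    omega
  have hpos : 6 + 0 + (2 * δ - 2) = 2 * δ + 4 := by omega
  intro j hj
  obtain rfl : j = 0 := by omega
  rw [hpos, add_zero, colourCyc_eq_colourCyc_iff]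
  refine ⟨?_, fun hfalse => absurd (htrue.symm.trans hfalse) (by decide), fun _ => ?_⟩
  · rw [apply_eq_apply_iff_ones, h6, h7, h6', h7']
    ring
  · rw [h6, h6']
    exact ⟨1, by ring⟩

lemma IsCharacteristicWord.criticalExponent_colourCyc
    (hu : IsCharacteristicWord u (freqB (δ / 2))) (hδ : 7 ≤ δ) :
    criticalExponent (colourCyc δ u) =
      ((2 * δ - 1 : ℕ) : ℝ≥0∞) / ((2 * δ - 2 : ℕ) : ℝ≥0∞) := by
  have hpos : 0 < 2 * δ - 2 := by omega
  have hpos' : ((2 * δ - 2 : ℕ) : ℝ≥0∞) ≠ 0 := Nat.cast_ne_zero.mpr hpos.ne'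
  rw [show 2 * δ - 1 = 2 * δ - 2 + 1 by omega, natCast_add_div_self hpos]
  refine le_antisymm (criticalExponent_le fun i p r hp h => ?_)
    ((hu.isRepetition_colourCyc hδ).le_criticalExponent hpos)
  have hle : r * (2 * δ - 2) ≤ p := by
    zify [show 2 ≤ 2 * δ by omega]
    exact hu.mul_le_of_isRepetition hδ hp h
  rw [Nat.cast_one, ENNReal.div_le_iff (Nat.cast_ne_zero.mpr hp.ne') (ENNReal.natCast_ne_top p),
    one_div, mul_comm, ← div_eq_mul_inv,
    ENNReal.le_div_iff_mul_le (Or.inl hpos') (Or.inl (ENNReal.natCast_ne_top _))]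
  exact_mod_cast hle

end Repetitions

theorem statement15 (δ : ℕ) (hδ : 7 ≤ δ) (u : ℕ → Bool) (hu : IsStandard u)
    (θ : ℝ) (hθ : HasSlope u θ) (a : ℕ → ℕ) (hcf : HasCF θ a)
    (ha1 : a 1 = 1) (ha2 : a 2 = δ / 2) (ha : ∀ n, 3 ≤ n → a n = 1) :
    Balanced (colourCyc δ u) ∧
    Nat.card (ZMod δ ⊕ ZMod δ) = 2 * δ ∧
    criticalExponent (colourCyc δ u) =
      ((2 * δ - 1 : ℕ) : ℝ≥0∞) / ((2 * δ - 2 : ℕ) : ℝ≥0∞) := by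
  have : NeZero δ := ⟨by omega⟩
  have hfreq : HasFreq u true (freqB (δ / 2)) := hθ.hasFreq_freqB hcf (by omega) ha1 ha2 ha
  have hchar : IsCharacteristicWord u (freqB (δ / 2)) :=
    hu.isCharacteristicWord hfreq (irrational_freqB _)
  refine ⟨?_, ?_, hchar.criticalExponent_colourCyc hδ⟩
  · exact balanced_colour hu.1.balanced stronglyBalanced_cyc stronglyBalanced_cyc
  · rw [Nat.card_sum, Nat.card_zmod, two_mul]

end BalancedCE
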